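/- Let n ≥ 2, M > 0, and let v*: [0, M] → [0, ∞) be a nonincreasing, locally absolutely continuous function. Define the radial function v on the ball B of volume M centered at the origin by v(x) = v*(ω_n |x|ⁿ). Then ∫_B |∇v|² dm = n² ω_n^{2/n} ∫₀^M s^{2 − 2/n} ((v*)'(s))² ds. Moreover, if v* satisfies −(v*)'(s) ≤ Λ n^{−2} ω_n^{−2/n} s^{−2 + 2/n} ∫₀^s (v*(t))^{p−1} dt for almost every s ∈ (0, M) and some Λ > 0 and p ≥ 1, and v*(M) = 0, then ∫_B |∇v|² dm ≤ Λ ∫₀^M (v*(t))^p dt. -/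

import Mathlib

open MeasureTheory Metric Set
open scoped ENNReal NNReal Pointwise

noncomputable section

/-- A bounded set `Ω ⊆ ℝⁿ` has `C¹` boundary if every boundary point admits a local `C¹`
defining function with nonvanishing gradient. -/
def HasC1Boundary {n : ℕ} (Ω : Set (EuclideanSpace ℝ (Fin n))) : Prop :=
  ∀ x ∈ frontier Ω, ∃ (U : Set (EuclideanSpace ℝ (Fin n)))
    (f : EuclideanSpace ℝ (Fin n) → ℝ),
      IsOpen U ∧ x ∈ U ∧ ContDiff ℝ 1 f ∧ (∀ y ∈ U, fderiv ℝ f y ≠ 0) ∧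
      Ω ∩ U = {y | y ∈ U ∧ f y < 0}

/-- Admissible (nontrivial) test functions for the Sobolev quotient on `Ω`; these form a dense
subclass of `W₀^{1,2}(Ω) \ {0}`. -/
def Admissible {n : ℕ} (Ω : Set (EuclideanSpace ℝ (Fin n)))
    (f : EuclideanSpace ℝ (Fin n) → ℝ) : Prop :=
  ContDiff ℝ 1 f ∧ HasCompactSupport f ∧ tsupport f ⊆ Ω ∧ ∃ x, f x ≠ 0

/-- The Sobolev quotient `Φ_p(f) = ∫_Ω |∇f|² dm / (∫_Ω |f|^p dm)^{2/p}`. -/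
def sobolevQuotient {n : ℕ} (p : ℝ) (Ω : Set (EuclideanSpace ℝ (Fin n)))
    (f : EuclideanSpace ℝ (Fin n) → ℝ) : ℝ :=
  (∫ x in Ω, ‖fderiv ℝ f x‖ ^ 2) / (∫ x in Ω, |f x| ^ p) ^ (2 / p)

/-- The Sobolev constant `C_p(Ω)`. -/
def sobolevConstant {n : ℕ} (p : ℝ) (Ω : Set (EuclideanSpace ℝ (Fin n))) : ℝ :=
  sInf (sobolevQuotient p Ω '' {f | Admissible Ω f})

/-- `u` is a positive extremal function realizing `C_p(Ω)`. -/
def IsExtremal {n : ℕ} (p : ℝ) (Ω : Set (EuclideanSpace ℝ (Fin n)))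
    (u : EuclideanSpace ℝ (Fin n) → ℝ) : Prop :=
  Admissible Ω u ∧ (∀ x ∈ Ω, 0 < u x) ∧
    sobolevQuotient p Ω u = sobolevConstant p Ω

/-- The distribution function `μ(t) = |{x ∈ Ω : u(x) > t}|`. -/
def distFun {n : ℕ} (Ω : Set (EuclideanSpace ℝ (Fin n)))
    (u : EuclideanSpace ℝ (Fin n) → ℝ) (t : ℝ) : ℝ :=
  (volume {x | x ∈ Ω ∧ t < u x}).toReal

/-- The decreasing rearrangement `u*(s) = inf{t ≥ 0 : μ(t) < s}`. -/
def decRearrangement {n : ℕ} (Ω : Set (EuclideanSpace ℝ (Fin n)))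
    (u : EuclideanSpace ℝ (Fin n) → ℝ) (s : ℝ) : ℝ :=
  sInf {t : ℝ | 0 ≤ t ∧ distFun Ω u t < s}

/-- `ω_n`, the volume of the unit ball in `ℝⁿ`. -/
def unitBallVol (n : ℕ) : ℝ :=
  (volume (ball (0 : EuclideanSpace ℝ (Fin n)) 1)).toReal

/-- The Laplacian `Δf = ∑ᵢ ∂²f/∂xᵢ²`. -/
def laplacian {n : ℕ} (f : EuclideanSpace ℝ (Fin n) → ℝ)
    (x : EuclideanSpace ℝ (Fin n)) : ℝ :=
  ∑ i : Fin n, fderiv ℝ (fun y => fderiv ℝ f y (EuclideanSpace.single i 1)) x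
    (EuclideanSpace.single i 1)


theorem aux_norm_fderiv (n : ℕ) (hn : 2 ≤ n) (w : ℝ) (hw : 0 < w) (f : ℝ → ℝ)
    (x : EuclideanSpace ℝ (Fin n)) (hx : x ≠ 0) :
    ‖fderiv ℝ (fun y : EuclideanSpace ℝ (Fin n) => f (w * ‖y‖ ^ n)) x‖ =
      n * w * ‖x‖ ^ (n - 1) * |deriv f (w * ‖x‖ ^ n)| := by
  have hxn : 0 < ‖x‖ := norm_pos_iff.mpr hx
  have hn0 : n ≠ 0 := by omega
  have hnR : (n : ℝ) ≠ 0 := by exact_mod_cast hn0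
  have hnt : Nontrivial (EuclideanSpace ℝ (Fin n)) := ⟨⟨x, 0, hx⟩⟩
  by_cases hf : DifferentiableAt ℝ f (w * ‖x‖ ^ n)
  · have hN : DifferentiableAt ℝ (fun y : EuclideanSpace ℝ (Fin n) => ‖y‖) x :=
      DifferentiableAt.norm ℝ differentiableAt_id hx
    have h1 := (hN.hasFDerivAt.pow n).const_mul w
    have h2 := hf.hasDerivAt.comp_hasFDerivAt x h1
    have h3 : fderiv ℝ (fun y : EuclideanSpace ℝ (Fin n) => f (w * ‖y‖ ^ n)) x = _ := h2.fderiv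
    rw [h3]
    simp only [norm_smul, norm_fderiv_norm hN, Real.norm_eq_abs, abs_of_pos hw, nsmul_eq_mul]
    rw [abs_of_nonneg (show (0 : ℝ) ≤ n * ‖x‖ ^ (n - 1) by positivity)]
    ring
  · rw [deriv_zero_of_not_differentiableAt hf, fderiv_zero_of_not_differentiableAt]
    · simp
    · intro hv
      apply hf
      set s0 := w * ‖x‖ ^ n with hs0
      have hs0p : 0 < s0 := by positivity
      let γ : ℝ → EuclideanSpace ℝ (Fin n) := fun s => ((s / w) ^ ((n : ℝ)⁻¹) / ‖x‖) • x
      have hγ0 : γ s0 = x := by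
        simp only [γ, hs0]
        rw [mul_div_cancel_left₀ _ hw.ne', Real.pow_rpow_inv_natCast hxn.le hn0, div_self hxn.ne',
          one_smul]
      have hγd : DifferentiableAt ℝ γ s0 := by
        have : DifferentiableAt ℝ (fun s : ℝ => (s / w) ^ ((n : ℝ)⁻¹)) s0 :=
          (differentiableAt_id.div_const w).rpow_const (Or.inl (by positivity))
        exact (this.div_const _).smul_const x
      have hcomp : DifferentiableAt ℝ
          ((fun y : EuclideanSpace ℝ (Fin n) => f (w * ‖y‖ ^ n)) ∘ γ) s0 :=
        DifferentiableAt.comp s0 (by rw [hγ0]; exact hv) hγd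
      refine hcomp.congr_of_eventuallyEq ?_
      filter_upwards [lt_mem_nhds hs0p] with s hs
      simp only [Function.comp, γ, norm_smul, Real.norm_eq_abs, abs_norm, abs_div]
      rw [div_mul_cancel₀ _ hxn.ne', abs_of_nonneg (by positivity),
        Real.rpow_inv_natCast_pow (by positivity) hn0, mul_div_cancel₀ _ hw.ne']

theorem aux_image (n : ℕ) (hn : 2 ≤ n) (w : ℝ) (hw : 0 < w) (R : ℝ) (hR : 0 < R) :
    (fun r : ℝ => w * r ^ n) '' Ioo 0 R = Ioo 0 (w * R ^ n) := by
  have hn0 : n ≠ 0 := by omega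
  ext s
  constructor
  · rintro ⟨r, ⟨h0, h1⟩, rfl⟩
    refine ⟨by positivity, ?_⟩
    have := pow_lt_pow_left₀ h1 h0.le hn0
    simpa using mul_lt_mul_of_pos_left this hw
  · rintro ⟨h0, h1⟩
    have hp : 0 < s / w := by positivity
    refine ⟨(s / w) ^ ((n : ℝ)⁻¹), ⟨by positivity, ?_⟩, ?_⟩
    · have h2 : s / w < R ^ n := by rw [div_lt_iff₀ hw]; linarith
      have := Real.rpow_lt_rpow hp.le h2 (z := (n : ℝ)⁻¹) (by positivity)
      rwa [Real.pow_rpow_inv_natCast hR.le hn0] at this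
    · simp only
      rw [Real.rpow_inv_natCast_pow hp.le hn0, mul_div_cancel₀ _ hw.ne']

theorem aux_part1 (n : ℕ) (hn : 2 ≤ n) (f : ℝ → ℝ) (R : ℝ) (hR : 0 < R) (hw : 0 < unitBallVol n) :
    (∫ x in ball (0 : EuclideanSpace ℝ (Fin n)) R,
      ‖fderiv ℝ (fun y : EuclideanSpace ℝ (Fin n) => f (unitBallVol n * ‖y‖ ^ n)) x‖ ^ 2) =
      (n : ℝ) ^ 2 * unitBallVol n ^ ((2 : ℝ) / (n : ℝ)) *
        ∫ s in Ioo (0 : ℝ) (unitBallVol n * R ^ n),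
          s ^ (2 - 2 / (n : ℝ)) * (deriv f s) ^ 2 := by
  have hn0 : n ≠ 0 := by omega
  have hnR : (n : ℝ) ≠ 0 := by exact_mod_cast hn0
  haveI : Nonempty (Fin n) := ⟨⟨0, by omega⟩⟩
  set w := unitBallVol n with hwdef
  let G : ℝ → ℝ := fun r => (n * w * r ^ (n - 1) * |deriv f (w * r ^ n)|) ^ 2
  have e1 : (∫ x in ball (0 : EuclideanSpace ℝ (Fin n)) R,
      ‖fderiv ℝ (fun y : EuclideanSpace ℝ (Fin n) => f (w * ‖y‖ ^ n)) x‖ ^ 2)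
      = ∫ x : EuclideanSpace ℝ (Fin n), (Iio R).indicator G ‖x‖ := by
    rw [← integral_indicator measurableSet_ball]
    apply integral_congr_ae
    have : ∀ᵐ x : EuclideanSpace ℝ (Fin n), x ≠ 0 := by
      simp [ae_iff]
    filter_upwards [this] with x hx
    by_cases hxR : ‖x‖ < R
    · rw [indicator_of_mem (by simpa using hxR), indicator_of_mem (by simpa using hxR)]
      rw [aux_norm_fderiv n hn w hw f x hx]
    · rw [indicator_of_notMem (by simpa using hxR), indicator_of_notMem (by simpa using hxR)]
  rw [e1, integral_fun_norm_addHaar, finrank_euclideanSpace_fin]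
  have hI : ∀ r : ℝ, r ^ (n - 1) • (Iio R).indicator G r
      = (Iio R).indicator (fun r => r ^ (n - 1) * G r) r := by
    intro r
    by_cases h : r ∈ Iio R <;> simp [h]
  simp_rw [hI]
  rw [setIntegral_indicator measurableSet_Iio, Ioi_inter_Iio, ← aux_image n hn w hw R hR,
    integral_image_eq_integral_abs_deriv_smul (f' := fun r => w * (n * r ^ (n - 1)))
      measurableSet_Ioo
      (fun r _ => ((hasDerivAt_pow n r).const_mul w).hasDerivWithinAt)]
  · have hvol : volume.real (ball (0 : EuclideanSpace ℝ (Fin n)) 1) = w := rfl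
    rw [hvol, nsmul_eq_mul, smul_eq_mul, ← integral_const_mul, ← integral_const_mul,
      ← integral_const_mul]
    refine setIntegral_congr_fun measurableSet_Ioo ?_
    intro r hr
    have hr0 : 0 < r := hr.1
    simp only [G, smul_eq_mul, mul_pow, sq_abs]
    rw [abs_of_nonneg (by positivity)]
    have key : w ^ ((2 : ℝ) / n) * (w * r ^ n) ^ (2 - 2 / (n : ℝ)) = w ^ 2 * (r ^ (n - 1)) ^ 2 := by
      rw [Real.mul_rpow hw.le (by positivity), ← mul_assoc, ← Real.rpow_add hw,
        ← Real.rpow_natCast r n, ← Real.rpow_mul hr0.le, ← pow_mul, ← Real.rpow_natCast w 2,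
        ← Real.rpow_natCast r]
      congr 2
      · push_cast; ring
      · rw [Nat.cast_mul, Nat.cast_sub (by omega)]
        field_simp
        push_cast; ring
    linear_combination (-(n : ℝ) ^ 2 * (w * (n * r ^ (n - 1))) * (deriv f (w * r ^ n)) ^ 2) * key
  · intro a ha b hb hab
    have : a ^ n = b ^ n := mul_left_cancel₀ hw.ne' hab
    exact (pow_left_inj₀ ha.1.le hb.1.le hn0).mp this

theorem aux_tonelli (M p : ℝ) (hM : 0 < M) (hp : 1 ≤ p) (f : ℝ → ℝ)
    (hnonneg : ∀ s ∈ Icc (0 : ℝ) M, 0 ≤ f s)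
    (hmono : AntitoneOn f (Icc (0 : ℝ) M))
    (hac : ∀ a b : ℝ, 0 < a → a ≤ b → b ≤ M → f b - f a = ∫ s in a..b, deriv f s)
    (hfM : f M = 0) (hd : ∀ s ∈ Ioo (0 : ℝ) M, deriv f s ≤ 0) :
    ∫⁻ s in Ioo 0 M, ENNReal.ofReal (-deriv f s * ∫ t in (0 : ℝ)..s, f t ^ (p - 1)) =
      ENNReal.ofReal (∫ t in (0 : ℝ)..M, f t ^ p) := by
  have hanti : ∀ q : ℝ, 0 ≤ q → AntitoneOn (fun t => f t ^ q) (Icc 0 M) := by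
    intro q hq a ha b hb hab
    exact Real.rpow_le_rpow (hnonneg b hb) (hmono ha hb hab) hq
  have hint : ∀ q : ℝ, 0 ≤ q → ∀ s ∈ Icc (0:ℝ) M,
      ENNReal.ofReal (∫ t in (0 : ℝ)..s, f t ^ q) = ∫⁻ t in Ioo 0 s, ENNReal.ofReal (f t ^ q) := by
    intro q hq s hs
    have hi : IntervalIntegrable (fun t => f t ^ q) volume 0 s := by
      apply AntitoneOn.intervalIntegrable
      rw [uIcc_of_le hs.1]
      exact (hanti q hq).mono (Icc_subset_Icc_right hs.2)
    rw [intervalIntegral.integral_of_le hs.1, integral_Ioc_eq_integral_Ioo,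
      ofReal_integral_eq_lintegral_ofReal]
    · exact (hi.1).mono_set Ioo_subset_Ioc_self
    · filter_upwards [ae_restrict_mem measurableSet_Ioo] with t ht
      exact Real.rpow_nonneg (hnonneg t ⟨ht.1.le, ht.2.le.trans hs.2⟩) _
  have hdint : ∀ t ∈ Ioo (0:ℝ) M,
      ∫⁻ s in Ioo t M, ENNReal.ofReal (-deriv f s) = ENNReal.ofReal (f t) := by
    intro t ht
    have hi : IntervalIntegrable (deriv f) volume t M := by
      have : MonotoneOn (-f) (uIcc t M) := by
        rw [uIcc_of_le ht.2.le]
        exact (hmono.mono (Icc_subset_Icc_left ht.1.le)).neg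
      have h := this.intervalIntegrable_deriv.neg
      refine h.congr (fun s _ => ?_)
      simp [deriv.neg]
    have h := hac t M ht.1 ht.2.le le_rfl
    rw [hfM, intervalIntegral.integral_of_le ht.2.le, integral_Ioc_eq_integral_Ioo] at h
    have h' : f t = ∫ s in Ioo t M, -deriv f s := by rw [integral_neg, ← h]; ring
    rw [h', ofReal_integral_eq_lintegral_ofReal]
    · exact (hi.1.mono_set Ioo_subset_Ioc_self).neg
    · filter_upwards [ae_restrict_mem measurableSet_Ioo] with s hs
      have := hd s ⟨ht.1.trans hs.1, hs.2⟩
      simpa using this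
  let F : ℝ → ℝ → ℝ≥0∞ := fun s t =>
    {q : ℝ × ℝ | q.2 < q.1}.indicator
      (fun q => ENNReal.ofReal (-deriv f q.1) * ENNReal.ofReal (f q.2 ^ (p - 1))) (s, t)
  have hS : MeasurableSet {q : ℝ × ℝ | q.2 < q.1} := measurableSet_lt measurable_snd measurable_fst
  have hmeasF : AEMeasurable (Function.uncurry F)
      ((volume.restrict (Ioo 0 M)).prod (volume.restrict (Ioo 0 M))) := by
    have h1 : AEMeasurable (fun t => f t ^ (p - 1)) (volume.restrict (Ioo 0 M)) :=
      aemeasurable_restrict_of_antitoneOn measurableSet_Ioo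
        ((hanti (p - 1) (by linarith)).mono Ioo_subset_Icc_self)
    have h2 : Measurable (fun s => -deriv f s) := (measurable_deriv f).neg
    have h3 : AEMeasurable (fun q : ℝ × ℝ =>
        ENNReal.ofReal (-deriv f q.1) * ENNReal.ofReal (f q.2 ^ (p - 1)))
        ((volume.restrict (Ioo 0 M)).prod (volume.restrict (Ioo 0 M))) :=
      (h2.comp measurable_fst).ennreal_ofReal.aemeasurable.mul
        (h1.comp_snd (μ := volume.restrict (Ioo 0 M))).ennreal_ofReal
    exact h3.indicator hS
  calc _ = ∫⁻ s in Ioo 0 M, ∫⁻ t in Ioo 0 M, F s t := by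
        refine setLIntegral_congr_fun measurableSet_Ioo ?_
        intro s hs
        have hFs : ∀ t, F s t = (Iio s).indicator
            (fun t => ENNReal.ofReal (-deriv f s) * ENNReal.ofReal (f t ^ (p - 1))) t := by
          intro t
          by_cases h : t < s <;> simp [F, h]
        simp only [hFs]
        rw [setLIntegral_indicator measurableSet_Iio, lintegral_const_mul' _ _ ENNReal.ofReal_ne_top,
          ENNReal.ofReal_mul (by linarith [hd s hs]), hint _ (by linarith) s ⟨hs.1.le, hs.2.le⟩]
        congr 3
        ext t; simp only [mem_Ioo, mem_inter_iff, mem_Iio]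
        exact ⟨fun h => ⟨h.2, h.1, h.2.trans hs.2⟩, fun h => ⟨h.2.1, h.1⟩⟩
    _ = ∫⁻ t in Ioo 0 M, ∫⁻ s in Ioo 0 M, F s t := lintegral_lintegral_swap hmeasF
    _ = ∫⁻ t in Ioo 0 M, ENNReal.ofReal (f t ^ p) := by
        refine setLIntegral_congr_fun measurableSet_Ioo ?_
        intro t ht
        have hFt : ∀ s, F s t = (Ioi t).indicator
            (fun s => ENNReal.ofReal (-deriv f s) * ENNReal.ofReal (f t ^ (p - 1))) s := by
          intro s
          by_cases h : t < s <;> simp [F, h]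
        simp only [hFt]
        have hset : Ioi t ∩ Ioo 0 M = Ioo t M := by
          ext s; simp only [mem_Ioo, mem_inter_iff, mem_Ioi]
          exact ⟨fun h => ⟨h.1, h.2.2⟩, fun h => ⟨h.1, ht.1.trans h.1, h.2⟩⟩
        have hft := hnonneg t ⟨ht.1.le, ht.2.le⟩
        rw [setLIntegral_indicator measurableSet_Ioi, lintegral_mul_const' _ _ ENNReal.ofReal_ne_top,
          hset, hdint t ht, ← ENNReal.ofReal_mul hft]
        congr 1
        rcases hft.eq_or_lt with h | h
        · rw [← h, zero_mul, Real.zero_rpow (by linarith)]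
        · rw [mul_comm, ← Real.rpow_add_one h.ne']; congr 1; ring
    _ = _ := (hint p (by linarith) M ⟨hM.le, le_rfl⟩).symm

/-- Dirichlet energy of a radial test function. Let `v* : [0,M] → [0,∞)` be
nonincreasing and locally absolutely continuous, and let `v(x) = v*(ω_n |x|ⁿ)` on the ball `B`
of volume `M` centered at the origin. Then
`∫_B |∇v|² dm = n² ω_n^{2/n} ∫₀^M s^{2−2/n} ((v*)'(s))² ds`; moreover if `v*(M) = 0` and
`−(v*)'(s) ≤ Λ n^{−2} ω_n^{−2/n} s^{−2+2/n} ∫₀^s (v*)^{p−1}` for a.e. `s ∈ (0,M)`, then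
`∫_B |∇v|² dm ≤ Λ ∫₀^M (v*)^p`. -/
theorem radial_dirichlet_energy (n : ℕ) (hn : 2 ≤ n) (M : ℝ) (hM : 0 < M)
    (vstar : ℝ → ℝ)
    (hnonneg : ∀ s ∈ Icc (0 : ℝ) M, 0 ≤ vstar s)
    (hmono : AntitoneOn vstar (Icc (0 : ℝ) M))
    (hac : ∀ a b : ℝ, 0 < a → a ≤ b → b ≤ M →
      vstar b - vstar a = ∫ s in a..b, deriv vstar s)
    (R : ℝ) (hR : 0 < R)
    (hvol : (volume (ball (0 : EuclideanSpace ℝ (Fin n)) R)).toReal = M)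
    (v : EuclideanSpace ℝ (Fin n) → ℝ)
    (hv : ∀ x, v x = vstar (unitBallVol n * ‖x‖ ^ n)) :
    (∫ x in ball (0 : EuclideanSpace ℝ (Fin n)) R, ‖fderiv ℝ v x‖ ^ 2) =
      (n : ℝ) ^ 2 * unitBallVol n ^ ((2 : ℝ) / (n : ℝ)) *
        ∫ s in (0 : ℝ)..M, s ^ (2 - 2 / (n : ℝ)) * (deriv vstar s) ^ 2 ∧
    ∀ (Λ p : ℝ), 0 < Λ → 1 ≤ p → vstar M = 0 →
      (∀ᵐ s ∂(volume.restrict (Ioo (0 : ℝ) M)),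
        -(deriv vstar s) ≤
          Λ * ((n : ℝ) ^ 2)⁻¹ * unitBallVol n ^ (-(2 : ℝ) / (n : ℝ)) *
            s ^ ((-2 : ℝ) + 2 / (n : ℝ)) * ∫ t in (0 : ℝ)..s, vstar t ^ (p - 1)) →
      (∫ x in ball (0 : EuclideanSpace ℝ (Fin n)) R, ‖fderiv ℝ v x‖ ^ 2) ≤
        Λ * ∫ t in (0 : ℝ)..M, vstar t ^ p := by
  have hn0 : n ≠ 0 := by omega
  have hnR : (n : ℝ) ≠ 0 := by exact_mod_cast hn0
  haveI : Nonempty (Fin n) := ⟨⟨0, by omega⟩⟩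
  have hw : 0 < unitBallVol n :=
    ENNReal.toReal_pos (measure_ball_pos _ _ one_pos).ne' measure_ball_lt_top.ne
  have hMR : unitBallVol n * R ^ n = M := by
    rw [← hvol, Measure.addHaar_ball_of_pos _ _ hR, ENNReal.toReal_mul,
      ENNReal.toReal_ofReal (by positivity), finrank_euclideanSpace_fin, mul_comm]
    rfl
  have hvf : v = fun y => vstar (unitBallVol n * ‖y‖ ^ n) := funext hv
  have h1 := aux_part1 n hn vstar R hR hw
  rw [hMR, ← hvf] at h1
  have hd : ∀ s ∈ Ioo (0 : ℝ) M, deriv vstar s ≤ 0 := by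
    intro s hs
    rw [← derivWithin_of_mem_nhds (Icc_mem_nhds hs.1 hs.2)]
    exact hmono.derivWithin_nonpos
  refine ⟨?_, ?_⟩
  · rw [h1, intervalIntegral.integral_of_le hM.le, integral_Ioc_eq_integral_Ioo]
  intro Λ p hΛ hp hvM hae
  have hT := aux_tonelli M p hM hp vstar hnonneg hmono hac hvM hd
  have hI : 0 ≤ ∫ t in (0 : ℝ)..M, vstar t ^ p :=
    intervalIntegral.integral_nonneg hM.le fun t ht => Real.rpow_nonneg (hnonneg t ht) _
  rw [h1, ← integral_const_mul, integral_eq_lintegral_of_nonneg_ae]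
  · apply ENNReal.toReal_le_of_le_ofReal (by positivity)
    rw [ENNReal.ofReal_mul hΛ.le, ← hT, ← lintegral_const_mul' _ _ ENNReal.ofReal_ne_top]
    apply lintegral_mono_ae
    filter_upwards [hae, ae_restrict_mem measurableSet_Ioo] with s hs hs0
    rw [← ENNReal.ofReal_mul hΛ.le]
    apply ENNReal.ofReal_le_ofReal
    have hsp : 0 < s := hs0.1
    set d := deriv vstar s
    set W := ∫ t in (0 : ℝ)..s, vstar t ^ (p - 1)
    have hdd : 0 ≤ -d := by linarith [hd s hs0]
    have k1 : unitBallVol n ^ ((2 : ℝ) / n) * unitBallVol n ^ (-(2 : ℝ) / n) = 1 := by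
      rw [← Real.rpow_add hw, show (2 : ℝ) / n + -2 / n = 0 by ring, Real.rpow_zero]
    have k2 : s ^ (2 - 2 / (n : ℝ)) * s ^ ((-2 : ℝ) + 2 / (n : ℝ)) = 1 := by
      rw [← Real.rpow_add hsp, show 2 - 2 / (n : ℝ) + ((-2 : ℝ) + 2 / n) = 0 by ring,
        Real.rpow_zero]
    have k3 : (n : ℝ) ^ 2 * ((n : ℝ) ^ 2)⁻¹ = 1 := mul_inv_cancel₀ (by positivity)
    set A := unitBallVol n ^ ((2 : ℝ) / n)
    set A' := unitBallVol n ^ (-(2 : ℝ) / n)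
    set S := s ^ (2 - 2 / (n : ℝ))
    set S' := s ^ ((-2 : ℝ) + 2 / (n : ℝ))
    have hC : 0 ≤ (n : ℝ) ^ 2 * A * S * (-d) := by positivity
    calc (n : ℝ) ^ 2 * A * (S * d ^ 2) = (n : ℝ) ^ 2 * A * S * (-d) * (-d) := by ring
      _ ≤ (n : ℝ) ^ 2 * A * S * (-d) * (Λ * ((n : ℝ) ^ 2)⁻¹ * A' * S' * W) :=
          mul_le_mul_of_nonneg_left hs hC
      _ = ((n : ℝ) ^ 2 * ((n : ℝ) ^ 2)⁻¹) * (A * A') * (S * S') * (Λ * (-d * W)) := by ring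
      _ = Λ * (-d * W) := by rw [k1, k2, k3]; ring
  · filter_upwards [ae_restrict_mem measurableSet_Ioo] with s hs
    have : 0 < s := hs.1
    positivity
  · have : Measurable fun s : ℝ => (n : ℝ) ^ 2 * unitBallVol n ^ ((2 : ℝ) / (n : ℝ)) *
        (s ^ (2 - 2 / (n : ℝ)) * (deriv vstar s) ^ 2) :=
      ((measurable_id.pow_const _).mul ((measurable_deriv vstar).pow_const 2)).const_mul _
    exact this.aestronglyMeasurable
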